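/- Let G = (V ∪ {s}, E) be a finite sandpile graph, let W ⊆ V be nonempty with the induced subgraph of G on (V ∪ {s}) \ W connected, and let ξ be a minimal configuration on W. Then ν_G[η : η_W = ξ] = ν_G[E_{V,W}] · |R_{G_W}|^{-1}; equivalently, |R_{G_W}| · #{η ∈ R_G : η_W = ξ} = #{η ∈ R_G : η ∈ E_{V,W}}. -/

import Mathlib

open scoped Classical

namespace Sandpile

/-- A finite sandpile multigraph on vertex set `α` (which plays the role of `V ∪ {s}`),
given by a distinguished sink and symmetric edge multiplicities. -/
structure Graph (α : Type*) where
  sink : α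
  b : α → α → ℕ

namespace Graph

variable {α : Type*} [Fintype α] [DecidableEq α] (G : Graph α)

/-- The non-sink vertices (the set `V`). -/
def VSet : Finset α := Finset.univ.erase G.sink

/-- Degree restricted to a finite set of vertices: `deg_F(x) = ∑_{y ∈ F} b_{xy}`. -/
def degIn (F : Finset α) (x : α) : ℕ := ∑ y ∈ F, G.b x y

/-- Total degree `deg_G(x)`. -/
def deg (x : α) : ℕ := ∑ y, G.b x y

/-- `G` is a genuine finite sandpile graph: symmetric multiplicities, no loops, connected. -/
def IsSandpileGraph : Prop :=
  (∀ x y, G.b x y = G.b y x) ∧ (∀ x, G.b x x = 0) ∧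
    ∀ x y : α, Relation.ReflTransGen (fun u v => 0 < G.b u v) x y

/-- Connectivity of the subgraph induced on the vertex set `S`. -/
def ConnectedOn (S : Set α) : Prop :=
  ∀ x ∈ S, ∀ y ∈ S,
    Relation.ReflTransGen (fun u v => u ∈ S ∧ v ∈ S ∧ 0 < G.b u v) x y

/-- A sandpile is stable if every non-sink vertex carries fewer particles than its degree. -/
def Stable (η : α → ℕ) : Prop := ∀ x ∈ G.VSet, η x < G.deg x

/-- `η` is ample for `F` if some vertex of `F` has at least `deg_F` particles. -/
def AmpleFor (η : α → ℕ) (F : Finset α) : Prop := ∃ x ∈ F, G.degIn F x ≤ η x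

/-- Dhar's burning test: recurrent = stable and ample for every nonempty `F ⊆ V`. -/
def Recurrent (η : α → ℕ) : Prop :=
  G.Stable η ∧ ∀ F ⊆ G.VSet, F.Nonempty → G.AmpleFor η F

/-- Remove one particle at `w` (`η - δ_w`). -/
def SubOne (η : α → ℕ) (w : α) : α → ℕ := fun x => if x = w then η x - 1 else η x

/-- `η` and `ξ` agree on `W` (restriction `η_W = ξ_W`). -/
def EqOn (η ξ : α → ℕ) (W : Finset α) : Prop := ∀ x ∈ W, η x = ξ x

/-- `ξ` is (generalized) minimal on `W`: it extends to a recurrent sandpile, and no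
recurrent extension stays recurrent after removing a particle from a vertex of `W`.
(`η - δ_w ∉ R_G` holds automatically if `η w = 0`, as then `η - δ_w` is not a configuration.) -/
def Minimal (W : Finset α) (ξ : α → ℕ) : Prop :=
  (∃ η, G.Recurrent η ∧ EqOn η ξ W) ∧
    ∀ η, G.Recurrent η → EqOn η ξ W → ∀ w ∈ W, ¬(1 ≤ η w ∧ G.Recurrent (SubOne η w))

/-- `ν_G[P]`: the uniform probability of the event `P` under the uniform measure on
recurrent configurations (configurations are normalized to vanish at the sink). -/
noncomputable def prob (P : (α → ℕ) → Prop) : ℝ :=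
  (Nat.card {η : α → ℕ // η G.sink = 0 ∧ G.Recurrent η ∧ P η} : ℝ) /
    (Nat.card {η : α → ℕ // η G.sink = 0 ∧ G.Recurrent η} : ℝ)

/-- The graph Laplacian with the sink row and column deleted. -/
noncomputable def lapRed :
    Matrix {x : α // x ≠ G.sink} {x : α // x ≠ G.sink} ℝ :=
  Matrix.of fun x y =>
    if (x : α) = (y : α) then (G.deg ↑x : ℝ) else -(G.b ↑x ↑y : ℝ)

/-- `H = (Δ')⁻¹`, extended by `0` on the sink. -/
noncomputable def Hfun (x y : α) : ℝ :=
  if hx : x = G.sink then 0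
  else if hy : y = G.sink then 0
  else (G.lapRed)⁻¹ ⟨x, hx⟩ ⟨y, hy⟩

/-- Oriented edges of the multigraph `G`: an edge from `p.1` to `p.2.1`, with copy
index `p.2.2` (parallel edges are distinct). -/
abbrev OEdge (G : Graph α) : Type _ := {p : α × α × ℕ // p.2.2 < G.b p.1 p.2.1}

/-- `K_G(e,f) = δ_{ef} - Y_G(e,f)` where `Y_G` is the transfer current matrix. -/
noncomputable def Kmat (e f : G.OEdge) : ℝ :=
  (if e = f then 1 else 0) -
    (G.Hfun e.1.1 f.1.1 - G.Hfun e.1.1 f.1.2.1 - G.Hfun e.1.2.1 f.1.1 +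
      G.Hfun e.1.2.1 f.1.2.1)

/-- Unburnt sets of phase one of the burning algorithm based on `Q`:
`U_0 = V`, `U_i = U_{i-1} \ B_i` with `B_i = {x ∈ U_{i-1} \ Q : η x ≥ deg_{U_{i-1}} x}`. -/
def U1 (η : α → ℕ) (Q : Finset α) : ℕ → Finset α
  | 0 => G.VSet
  | i + 1 => (U1 η Q i).filter fun x => x ∈ Q ∨ η x < G.degIn (U1 η Q i) x

/-- The final unburnt set `U^{(1)}_I` of phase one (the sequence `U1` is decreasing,
hence stabilizes after at most `|α|` steps). -/
def U1lim (η : α → ℕ) (Q : Finset α) : Finset α := G.U1 η Q (Fintype.card α)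

/-- Unburnt sets of phase two of the burning algorithm based on `Q`. -/
def U2 (η : α → ℕ) (Q : Finset α) : ℕ → Finset α
  | 0 => G.U1lim η Q
  | i + 1 => (U2 η Q i).filter fun x => η x < G.degIn (U2 η Q i) x

/-- Recurrence in the wired graph `G_W` (note `deg_{G_W}(x) = deg_G(x)` for `x ∈ W`,
and `deg_F` for `F ⊆ W` is the same in `G_W` and `G`). -/
def WiredRecurrent (W : Finset α) (ξ : α → ℕ) : Prop :=
  (∀ x ∈ W, ξ x < G.deg x) ∧ ∀ F ⊆ W, F.Nonempty → ∃ x ∈ F, G.degIn F x ≤ ξ x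

/-- `ξ` is minimal in the wired graph `G_W`. -/
def WiredMinimal (W : Finset α) (ξ : α → ℕ) : Prop :=
  G.WiredRecurrent W ξ ∧ ∀ w ∈ W, ¬(1 ≤ ξ w ∧ G.WiredRecurrent W (SubOne ξ w))

/-- Entry points `E(ξ,W)` of `ξ ∈ R_{G_W}`: vertices burnable at the first step. -/
def entryPoints (W : Finset α) (ξ : α → ℕ) : Finset α :=
  W.filter fun w => G.degIn W w ≤ ξ w

/-- `x` is burnable given the burnt set `S`: `η(x) ≥ deg_G(x) − ∑_{y ∈ S} b_{xy}`. -/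
def Burnable (η : α → ℕ) (S : Finset α) (x : α) : Prop :=
  G.degIn (Finset.univ \ S) x ≤ η x

/-- A burning sequence starting from the burnt set `S`. -/
def IsBurnSeq (η : α → ℕ) : Finset α → List α → Prop
  | _, [] => True
  | S, x :: l => x ∉ S ∧ G.Burnable η S x ∧ IsBurnSeq η (insert x S) l

/-- `B` is a burnt set for `η`: some burning sequence from `{s}` burns exactly `B`. -/
def IsBurntSet (η : α → ℕ) (B : Finset α) : Prop :=
  ∃ l : List α, G.IsBurnSeq η {G.sink} l ∧ l.toFinset = B

/-- Reachability within the vertex set `S`. -/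
def ReachIn (S : Set α) (x y : α) : Prop :=
  Relation.ReflTransGen (fun u v => u ∈ S ∧ v ∈ S ∧ 0 < G.b u v) x y

/-- `C` is a connected component of the subgraph induced on `(V ∪ {s}) \ W`
that does not contain the sink. -/
def IsHoleComp (W C : Finset α) : Prop :=
  C.Nonempty ∧ G.sink ∉ C ∧
    ∀ x ∈ C, ∀ y : α, y ∈ C ↔ y ∉ W ∧ G.ReachIn {a : α | a ∉ W} x y

/-- Adjacency induced by a finite set `t` of (undirected, indexed) edges. -/
def edgeRel (t : Finset (Sym2 α × ℕ)) (u v : α) : Prop := ∃ k : ℕ, (s(u, v), k) ∈ t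

/-- `t` is a spanning tree of the multigraph `G`: it consists of edges of `G`
(parallel edges distinct), it spans (connected), and every edge is a bridge
(equivalently, it is acyclic). -/
def IsSpanningTree (t : Finset (Sym2 α × ℕ)) : Prop :=
  (∀ p ∈ t, ∃ x y : α, p.1 = s(x, y) ∧ p.2 < G.b x y) ∧
  (∀ u v : α, Relation.ReflTransGen (edgeRel t) u v) ∧
  ∀ p ∈ t, ∀ x y : α, p.1 = s(x, y) →
    ¬ Relation.ReflTransGen (edgeRel (t.erase p)) x y

/-- Adjacency induced by a set of (undirected, indexed) edges. -/
def edgeRelSet (t : Set (Sym2 α × ℕ)) (u v : α) : Prop := ∃ k : ℕ, (s(u, v), k) ∈ t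

/-- Set version of `IsSpanningTree`. -/
def IsSpanningTreeSet (t : Set (Sym2 α × ℕ)) : Prop :=
  (∀ p ∈ t, ∃ x y : α, p.1 = s(x, y) ∧ p.2 < G.b x y) ∧
  (∀ u v : α, Relation.ReflTransGen (edgeRelSet t) u v) ∧
  ∀ p ∈ t, ∀ x y : α, p.1 = s(x, y) →
    ¬ Relation.ReflTransGen (edgeRelSet (t \ {p})) x y

/-- The step at which `x` burns in phase one (0 for the sink; `sInf ∅ = 0` if `x`
never burns in phase one). -/
noncomputable def p1time (η : α → ℕ) (Q : Finset α) (x : α) : ℕ :=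
  sInf {i : ℕ | x ∉ G.U1 η Q i}

/-- The step at which `x` burns in phase two. -/
noncomputable def p2time (η : α → ℕ) (Q : Finset α) (x : α) : ℕ :=
  sInf {i : ℕ | x ∉ G.U2 η Q i}

/-- Vertices burnt at step `i` of phase one (`B^{(1)}_0 = {s}`). -/
def B1 (η : α → ℕ) (Q : Finset α) : ℕ → Finset α
  | 0 => {G.sink}
  | i + 1 => G.U1 η Q i \ G.U1 η Q (i + 1)

/-- Vertices burnt at step `i` of phase two (`B^{(2)}_0` = everything burnt in phase
one, including the sink). -/
def B2 (η : α → ℕ) (Q : Finset α) : ℕ → Finset α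
  | 0 => Finset.univ \ G.U1lim η Q
  | i + 1 => G.U2 η Q i \ G.U2 η Q (i + 1)

/-- The set `B^{(p)}_{i-1}` of vertices burnt at the step preceding the step at which
`x` burns (in the appropriate phase). -/
noncomputable def prevBurnt (η : α → ℕ) (Q : Finset α) (x : α) : Finset α :=
  if x ∈ G.U1lim η Q then G.B2 η Q (G.p2time η Q x - 1)
  else G.B1 η Q (G.p1time η Q x - 1)

/-- The set `D = B^{(p)}_0 ∪ ⋯ ∪ B^{(p)}_{i-1}` of vertices burnt strictly before `x`
in the phase in which `x` burns. -/
noncomputable def burntBefore (η : α → ℕ) (Q : Finset α) (x : α) : Finset α :=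
  if x ∈ G.U1lim η Q then Finset.univ \ G.U2 η Q (G.p2time η Q x - 1)
  else Finset.univ \ G.U1 η Q (G.p1time η Q x - 1)

/-- `j = η(x) − deg_G(x) + n_x` with `n_x = ∑_{y ∈ D} b_{xy}`. -/
noncomputable def jX (η : α → ℕ) (Q : Finset α) (x : α) : ℕ :=
  η x + G.degIn (G.burntBefore η Q x) x - G.deg x

/-- The defining property of the edge `e_x` of the burning bijection based on `Q`:
`e_x` has tail `x`, head burnt at the previous step, and exactly `j` smaller elements
of `P_x` under the given edge order `lt x`. -/
def EdgeSpec (lt : α → G.OEdge → G.OEdge → Prop) (η : α → ℕ) (Q : Finset α)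
    (x : α) (e : G.OEdge) : Prop :=
  e.1.1 = x ∧ e.1.2.1 ∈ G.prevBurnt η Q x ∧
    {f : G.OEdge | f.1.1 = x ∧ f.1.2.1 ∈ G.prevBurnt η Q x ∧ lt x f e}.ncard =
      G.jX η Q x

/-- The (oriented) spanning tree `t(η) = {e_x : x ∈ V}` assigned to `η` by the
burning bijection based on `Q`. -/
def treeOf (lt : α → G.OEdge → G.OEdge → Prop) (η : α → ℕ) (Q : Finset α) :
    Set G.OEdge :=
  {e | ∃ x ∈ G.VSet, G.EdgeSpec lt η Q x e}

/-- Forget the orientation of an oriented edge. -/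
def undir (e : G.OEdge) : Sym2 α × ℕ := (s(e.1.1, e.1.2.1), e.1.2.2)

/-- Total burning order: phase-one vertices first (at their phase-one step), then
phase-two vertices. -/
noncomputable def burnOrder (η : α → ℕ) (Q : Finset α) (x : α) : ℕ :=
  if x ∈ G.U1lim η Q then Fintype.card α + 1 + G.p2time η Q x else G.p1time η Q x

/-- Edge multiplicities of the auxiliary graph `G_W^*` (on vertex set `W ∪ {s}`):
`b*_{xy} = b_{xy}` for `x,y ∈ W`; `b*_{xs} = ∑_{z ∉ W} b_{xz}` for `x ∈ Q` and
`b*_{xs} = 0` for `x ∈ W \ Q`. -/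
def bstar (Q W : Finset α) (x y : α) : ℕ :=
  if x ∈ W ∧ y ∈ W then G.b x y
  else if x ∈ W ∧ y = G.sink then
    if x ∈ Q then ∑ z ∈ Finset.univ \ W, G.b x z else 0
  else if y ∈ W ∧ x = G.sink then
    if y ∈ Q then ∑ z ∈ Finset.univ \ W, G.b z y else 0
  else 0

/-- Recurrence in the auxiliary graph `G_W^*`. -/
def StarRecurrent (Q W : Finset α) (ζ : α → ℕ) : Prop :=
  (∀ x ∈ W, ζ x < ∑ y ∈ insert G.sink W, G.bstar Q W x y) ∧
    ∀ F ⊆ W, F.Nonempty → ∃ x ∈ F, (∑ y ∈ F, G.bstar Q W x y) ≤ ζ x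

end Graph

end Sandpile

open Sandpile

/-!
A recurrent `η` lies in `E_{V,W}` exactly when `η` is recurrent on `W` in the wired graph and, off
`W`, is stable and burns with all of `W` still unburnt. The first condition only involves `η` on
`W` and the second only `η` off `W`, so `E_{V,W}` is a product and every `ξ ∈ R_{G_W}` has the same
number of extensions in `E_{V,W}`.

If `ξ` is minimal, all its recurrent extensions `η` are in `E_{V,W}`. Indeed any burning order of
`V` for `η` restricts to a burning order of `W` for `ξ`. Minimality leaves no surplus particle on
`W`: `ξ w` is the degree of `w` into the part of `W` still unburnt when `w` burns, so `w` has no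
neighbour off `W` which burns after it. Hence no vertex off `W` owes its burning to a vertex of `W`
burnt before it.
-/

theorem card_mul_card_of_dependsOn {ι : Type*} {β : ι → Type*} {W : Set ι}
    {A B : (∀ i, β i) → Prop} (hA : DependsOn A W) (hB : DependsOn B Wᶜ) (ζ₀ ξ : ∀ i, β i) :
    Nat.card {ζ : ∀ i, β i // (∀ i ∉ W, ζ i = ζ₀ i) ∧ A ζ} *
        Nat.card {η : ∀ i, β i // (∀ i ∈ W, η i = ξ i) ∧ B η} =
      Nat.card {η // A η ∧ B η} := by
  have onW (f g : ∀ i, β i) : ∀ i ∈ W, W.piecewise f g i = f i :=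
    fun i hi => W.piecewise_eq_of_mem f g hi
  have offW (f g : ∀ i, β i) : ∀ i ∉ W, W.piecewise f g i = g i :=
    fun i hi => W.piecewise_eq_of_notMem f g hi
  rw [← Nat.card_prod]
  refine Nat.card_congr
    { toFun p := ⟨W.piecewise p.1 p.2, (hA (onW _ _)).mpr p.1.2.2, (hB (offW _ _)).mpr p.2.2.2⟩
      invFun η := (⟨W.piecewise η ζ₀, offW _ _, (hA (onW _ _)).mpr η.2.1⟩,
        ⟨W.piecewise ξ η, onW _ _, (hB (offW _ _)).mpr η.2.2⟩)
      left_inv := ?_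
      right_inv η := ?_ }
  · rintro ⟨⟨ζ, hζ, _⟩, ⟨η, hη, _⟩⟩
    ext x <;> by_cases hx : x ∈ W
    · simp [hx]
    · simp [hx, hζ x hx]
    · simp [hx, hη x hx]
    · simp [hx]
  · ext x
    by_cases hx : x ∈ W <;> simp [hx]

namespace Sandpile.Graph

section Degree

variable {α : Type*} {G : Graph α} {F F' : Finset α} {x z : α}

theorem degIn_mono (h : F ⊆ F') (x : α) : G.degIn F x ≤ G.degIn F' x :=
  Finset.sum_le_sum_of_subset h

theorem b_add_degIn_le (h : F ⊆ F') (hz : z ∈ F') (hzF : z ∉ F) :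
    G.b x z + G.degIn F x ≤ G.degIn F' x := by
  rw [degIn, ← Finset.sum_cons hzF]
  exact degIn_mono (Finset.cons_subset.mpr ⟨hz, h⟩) x

theorem ConnectedOn.exists_exit {S : Set α} (hS : G.ConnectedOn S) (hFS : ↑F ⊆ S)
    (hF : F.Nonempty) (hzS : z ∈ S) (hzF : z ∉ F) :
    ∃ x ∈ F, ∃ y ∈ S, y ∉ F ∧ 0 < G.b x y := by
  by_contra! hclosed
  obtain ⟨x, hx⟩ := hF
  have reachable_mem (y : α)
      (hxy : Relation.ReflTransGen (fun u v => u ∈ S ∧ v ∈ S ∧ 0 < G.b u v) x y) : y ∈ F := by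
    induction hxy with
    | refl => exact hx
    | tail _ huv hu =>
      by_contra hv
      exact huv.2.2.not_ge (hclosed _ hu _ huv.2.1 hv)
  exact hzF (reachable_mem z (hS x (hFS hx) z hzS))

end Degree

section BurningOrder

variable {α : Type*} {G : Graph α} {S T : Finset α} {η r : α → ℕ}

/-- `r` ranks the vertices of `S` in an order in which `η` burns them: each `x ∈ S` carries at
least as many particles as it has edges to the vertices of `S` not ranked before it. Vertices of
equal rank burn simultaneously. -/
def IsBurningOrder (G : Graph α) (S : Finset α) (η r : α → ℕ) : Prop :=
  ∀ x ∈ S, G.degIn {y ∈ S | r x ≤ r y} x ≤ η x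

theorem IsBurningOrder.mono (hr : G.IsBurningOrder S η r) (hTS : T ⊆ S) :
    G.IsBurningOrder T η r :=
  fun x hx => (degIn_mono (Finset.filter_subset_filter _ hTS) x).trans (hr x (hTS hx))

theorem IsBurningOrder.ampleFor (hr : G.IsBurningOrder S η r) (hTS : T ⊆ S) (hT : T.Nonempty) :
    G.AmpleFor η T := by
  obtain ⟨x, hx, hfirst⟩ := T.exists_min_image r hT
  have hT_later : T ⊆ {y ∈ S | r x ≤ r y} :=
    fun y hy => Finset.mem_filter.mpr ⟨hTS hy, hfirst y hy⟩
  exact ⟨x, hx, (degIn_mono hT_later x).trans (hr x (hTS hx))⟩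

theorem exists_isBurningOrder (hS : ∀ F ⊆ S, F.Nonempty → G.AmpleFor η F) :
    ∃ r, G.IsBurningOrder S η r := by
  induction S using Finset.strongInduction with
  | H S ih =>
    rcases S.eq_empty_or_nonempty with rfl | hne
    · exact ⟨0, by simp [IsBurningOrder]⟩
    obtain ⟨x, hx, hηx⟩ := hS S subset_rfl hne
    obtain ⟨r, hr⟩ := ih (S.erase x) (Finset.erase_ssubset hx)
      fun F hF => hS F (hF.trans (S.erase_subset x))
    refine ⟨fun y => if y = x then 0 else r y + 1, fun a ha => ?_⟩
    by_cases hax : a = x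
    · subst hax
      exact (degIn_mono (Finset.filter_subset _ _) a).trans hηx
    · refine (degIn_mono (fun y hy => ?_) a).trans (hr a (Finset.mem_erase.mpr ⟨hax, ha⟩))
      by_cases hyx : y = x <;> simp_all

end BurningOrder

section Wired

variable {α : Type*} [Fintype α] {G : Graph α} {S W : Finset α} {η ξ r : α → ℕ} {w y : α}

theorem dependsOn_wiredRecurrent (G : Graph α) (W : Finset α) :
    DependsOn (G.WiredRecurrent W) (W : Set α) := by
  intro η η' h
  refine propext (and_congr (forall₂_congr fun x hx => by rw [h x hx]) ?_)
  exact forall₃_congr fun F hF _ => exists_congr fun x =>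
    and_congr_right fun hx => by rw [h x (hF hx)]

variable [DecidableEq α]

theorem dependsOn_wiredMinimal (G : Graph α) (W : Finset α) :
    DependsOn (G.WiredMinimal W) (W : Set α) := by
  intro η η' h
  have hsub (w : α) : G.WiredRecurrent W (SubOne η w) = G.WiredRecurrent W (SubOne η' w) :=
    G.dependsOn_wiredRecurrent W fun x hx => by rw [SubOne, SubOne, h x hx]
  refine propext (and_congr (iff_of_eq (G.dependsOn_wiredRecurrent W h)) ?_)
  exact forall₂_congr fun w hw => by rw [h w hw, hsub]

theorem WiredMinimal.degIn_eq (hξ : G.WiredMinimal W ξ) (hr : G.IsBurningOrder W ξ r)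
    (hw : w ∈ W) : G.degIn {y ∈ W | r w ≤ r y} w = ξ w := by
  by_contra hne
  have hsurplus : G.degIn {y ∈ W | r w ≤ r y} w < ξ w := (hr w hw).lt_of_ne hne
  have hr' : G.IsBurningOrder W (SubOne ξ w) r := by
    intro x hx
    rw [SubOne]
    split_ifs with hxw
    · subst hxw
      exact Nat.le_sub_one_of_lt hsurplus
    · exact hr x hx
  refine hξ.2 w hw ⟨Nat.one_le_of_lt hsurplus, fun x hx => ?_, fun F hF hne => hr'.ampleFor hF hne⟩
  have hle : SubOne ξ w x ≤ ξ x := by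
    rw [SubOne]
    split_ifs
    exacts [Nat.sub_le _ _, le_rfl]
  exact hle.trans_lt (hξ.1.1 x hx)

theorem WiredMinimal.b_eq_zero (hξ : G.WiredMinimal W ξ) (hr : G.IsBurningOrder S ξ r)
    (hWS : W ⊆ S) (hw : w ∈ W) (hy : y ∈ S) (hyW : y ∉ W) (hwy : r w ≤ r y) : G.b w y = 0 := by
  have hle : G.b w y + G.degIn {z ∈ W | r w ≤ r z} w ≤ G.degIn {z ∈ S | r w ≤ r z} w :=
    b_add_degIn_le (Finset.filter_subset_filter _ hWS) (by simp [hy, hwy]) (by simp [hyW])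
  have hW : G.degIn {z ∈ W | r w ≤ r z} w = ξ w := hξ.degIn_eq (hr.mono hWS) hw
  have hS : G.degIn {z ∈ S | r w ≤ r z} w ≤ ξ w := hr w (hWS hw)
  omega

end Wired

section Avoiding

variable {α : Type*} [Fintype α] [DecidableEq α] {G : Graph α} {W : Finset α} {η ζ ξ : α → ℕ}

theorem subset_VSet_iff : W ⊆ G.VSet ↔ G.sink ∉ W := by
  simp [VSet, Finset.subset_erase]

/-- `η` is recurrent on `V \ W` with all of `W` kept unburnt. The second condition is the subset
form of the event that phase one of burning based on `W` burns all of `V \ W`. -/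
def RecurrentAvoiding (G : Graph α) (W : Finset α) (η : α → ℕ) : Prop :=
  (∀ x ∈ G.VSet \ W, η x < G.deg x) ∧
    ∀ F ⊆ G.VSet \ W, F.Nonempty → ∃ x ∈ F, G.degIn (F ∪ W) x ≤ η x

theorem dependsOn_recurrentAvoiding (G : Graph α) (W : Finset α) :
    DependsOn (G.RecurrentAvoiding W) (W : Set α)ᶜ := by
  intro η η' h
  have h' : ∀ x ∈ G.VSet \ W, η x = η' x := fun x hx => h x (Finset.mem_sdiff.mp hx).2
  refine propext (and_congr (forall₂_congr fun x hx => by rw [h' x hx]) ?_)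
  exact forall₃_congr fun F hF _ => exists_congr fun x =>
    and_congr_right fun hx => by rw [h' x (hF hx)]

theorem Recurrent.wiredRecurrent (hη : G.Recurrent η) (hW : W ⊆ G.VSet) :
    G.WiredRecurrent W η :=
  ⟨fun x hx => hη.1 x (hW hx), fun F hF => hη.2 F (hF.trans hW)⟩

theorem WiredRecurrent.recurrent (hW : G.WiredRecurrent W η) (hη : G.RecurrentAvoiding W η) :
    G.Recurrent η := by
  refine ⟨fun x hx => ?_, fun F hF hne => ?_⟩
  · by_cases hxW : x ∈ W
    · exact hW.1 x hxW
    · exact hη.1 x (Finset.mem_sdiff.mpr ⟨hx, hxW⟩)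
  rcases (F \ W).eq_empty_or_nonempty with hFW | hFW
  · exact hW.2 F (Finset.sdiff_eq_empty_iff_subset.mp hFW) hne
  · obtain ⟨x, hx, hηx⟩ := hη.2 (F \ W) (Finset.sdiff_subset_sdiff hF subset_rfl) hFW
    refine ⟨x, (Finset.mem_sdiff.mp hx).1, (degIn_mono ?_ x).trans hηx⟩
    rw [Finset.sdiff_union_self_eq_union]
    exact Finset.subset_union_left

theorem WiredRecurrent.recurrent_piecewise (hζ : G.WiredRecurrent W ζ)
    (hη : G.RecurrentAvoiding W η) : G.Recurrent (W.piecewise ζ η) := by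
  have hW : G.WiredRecurrent W (W.piecewise ζ η) :=
    (G.dependsOn_wiredRecurrent W fun x hx => W.piecewise_eq_of_mem ζ η hx).mpr hζ
  exact hW.recurrent
    ((G.dependsOn_recurrentAvoiding W fun x hx => W.piecewise_eq_of_notMem ζ η hx).mpr hη)

theorem recurrentAvoiding_deg_sub_one (hWs : G.sink ∉ W)
    (hconn : G.ConnectedOn {x : α | x ∉ W}) : G.RecurrentAvoiding W fun x => G.deg x - 1 := by
  have exists_degIn_lt : ∀ F ⊆ G.VSet \ W, F.Nonempty → ∃ x ∈ F, G.degIn (F ∪ W) x < G.deg x := by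
    intro F hF hne
    have hsF : G.sink ∉ F := subset_VSet_iff.mp (hF.trans Finset.sdiff_subset)
    obtain ⟨x, hx, y, hyW, hyF, hxy⟩ :=
      hconn.exists_exit (fun x hx => (Finset.mem_sdiff.mp (hF hx)).2) hne hWs hsF
    have hle : G.b x y + G.degIn (F ∪ W) x ≤ G.deg x :=
      b_add_degIn_le (Finset.subset_univ _) (Finset.mem_univ y)
        (Finset.notMem_union.mpr ⟨hyF, hyW⟩)
    exact ⟨x, hx, by omega⟩
  refine ⟨fun x hx => ?_, fun F hF hne => ?_⟩
  · obtain ⟨y, hy, hlt⟩ :=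
      exists_degIn_lt {x} (Finset.singleton_subset_iff.mpr hx) (Finset.singleton_nonempty x)
    rw [Finset.mem_singleton.mp hy] at hlt
    exact Nat.sub_one_lt_of_lt hlt
  · obtain ⟨x, hx, hlt⟩ := exists_degIn_lt F hF hne
    exact ⟨x, hx, Nat.le_sub_one_of_lt hlt⟩

theorem Minimal.wiredMinimal (hξ : G.Minimal W ξ) (hWs : G.sink ∉ W)
    (hconn : G.ConnectedOn {x : α | x ∉ W}) : G.WiredMinimal W ξ := by
  have hmax := recurrentAvoiding_deg_sub_one hWs hconn
  obtain ⟨⟨η, hη, hηξ⟩, hnot⟩ := hξ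
  have hrec : G.WiredRecurrent W ξ :=
    (G.dependsOn_wiredRecurrent W hηξ).mp (hη.wiredRecurrent (subset_VSet_iff.mpr hWs))
  refine ⟨hrec, fun w hw ⟨hξw, hsub⟩ => ?_⟩
  set η₀ := W.piecewise ξ fun x => G.deg x - 1
  have hη₀ξ : EqOn η₀ ξ W := fun x hx => W.piecewise_eq_of_mem _ _ hx
  have hsub₀ : SubOne η₀ w = W.piecewise (SubOne ξ w) fun x => G.deg x - 1 := by
    ext x
    by_cases hx : x ∈ W
    · simp [SubOne, hx, hη₀ξ x hx]
    · simp [SubOne, η₀, hx, ne_of_mem_of_not_mem hw hx |>.symm]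
  refine hnot η₀ (hrec.recurrent_piecewise hmax) hη₀ξ w hw ⟨?_, ?_⟩
  · rwa [hη₀ξ w hw]
  · rw [hsub₀]
    exact hsub.recurrent_piecewise hmax

theorem WiredMinimal.recurrentAvoiding (hηW : G.WiredMinimal W η) (hW : W ⊆ G.VSet)
    (hb : ∀ x y, G.b x y = 0 → G.b y x = 0) (hη : G.Recurrent η) : G.RecurrentAvoiding W η := by
  refine ⟨fun x hx => hη.1 x (Finset.mem_sdiff.mp hx).1, fun F hF hne => ?_⟩
  obtain ⟨r, hr⟩ := exists_isBurningOrder hη.2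
  obtain ⟨x, hx, hfirst⟩ := F.exists_min_image r hne
  obtain ⟨hxV, hxW⟩ := Finset.mem_sdiff.mp (hF hx)
  refine ⟨x, hx, le_trans ?_ (hr x hxV)⟩
  refine Finset.sum_le_sum_of_ne_zero fun y hy hxy => ?_
  rcases Finset.mem_union.mp hy with hyF | hyW
  · exact Finset.mem_filter.mpr ⟨(Finset.mem_sdiff.mp (hF hyF)).1, hfirst y hyF⟩
  · refine Finset.mem_filter.mpr ⟨hW hyW, ?_⟩
    by_contra! hyx
    exact hxy (hb y x (hηW.b_eq_zero hr hW hyW hxV hxW hyx.le))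

theorem WiredMinimal.recurrent_and_eqOn_iff (hξ : G.WiredMinimal W ξ) (hW : W ⊆ G.VSet)
    (hb : ∀ x y, G.b x y = 0 → G.b y x = 0) :
    G.Recurrent η ∧ EqOn η ξ W ↔ EqOn η ξ W ∧ G.RecurrentAvoiding W η := by
  rw [and_comm]
  refine and_congr_right fun hηξ => ⟨fun hη => ?_, fun hη => ?_⟩
  · exact ((G.dependsOn_wiredMinimal W hηξ).mpr hξ).recurrentAvoiding hW hb hη
  · exact ((G.dependsOn_wiredRecurrent W hηξ).mpr hξ.1).recurrent hη

end Avoiding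

section PhaseOne

variable {α : Type*} [Fintype α] [DecidableEq α] {G : Graph α} {U Q W : Finset α} {η : α → ℕ}

theorem subset_U1 (hU : U ⊆ G.VSet) (hη : ∀ x ∈ U, x ∈ Q ∨ η x < G.degIn U x) (i : ℕ) :
    U ⊆ G.U1 η Q i := by
  induction i with
  | zero => exact hU
  | succ i ih =>
    exact fun x hx => Finset.mem_filter.mpr
      ⟨ih hx, (hη x hx).imp_right fun h => h.trans_le (degIn_mono ih x)⟩

theorem antitone_U1 (G : Graph α) (η : α → ℕ) (Q : Finset α) : Antitone (G.U1 η Q) :=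
  antitone_nat_of_succ_le fun _ => Finset.filter_subset _ _

theorem U1_card_add_one (G : Graph α) (η : α → ℕ) (Q : Finset α) :
    G.U1 η Q (Fintype.card α + 1) = G.U1lim η Q := by
  have hmono : Monotone fun i => (G.U1 η Q i)ᶜ.card := fun i j hij =>
    Finset.card_le_card (Finset.compl_subset_compl.mpr (G.antitone_U1 η Q hij))
  have eq_of_card_eq (i : ℕ) (h : (G.U1 η Q i)ᶜ.card = (G.U1 η Q (i + 1))ᶜ.card) :
      G.U1 η Q i = G.U1 η Q (i + 1) :=
    compl_injective (Finset.eq_of_subset_of_card_le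
      (Finset.compl_subset_compl.mpr (G.antitone_U1 η Q i.le_succ)) h.ge)
  refine (eq_of_card_eq _ (Nat.stabilises_of_monotone hmono (fun i => Finset.card_le_univ _)
    (fun i h => ?_) (Nat.le_succ _)).symm).symm
  have hstep : G.U1 η Q (i + 1) = G.U1 η Q (i + 2) :=
    congrArg (fun U : Finset α => U.filter fun x => x ∈ Q ∨ η x < G.degIn U x)
      (eq_of_card_eq i h)
  exact congrArg (fun U => Uᶜ.card) hstep

theorem lt_degIn_U1lim {x : α} (hx : x ∈ G.U1lim η Q) (hxQ : x ∉ Q) :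
    η x < G.degIn (G.U1lim η Q) x := by
  rw [← G.U1_card_add_one η Q] at hx
  exact (Finset.mem_filter.mp hx).2.resolve_left hxQ

theorem U1lim_eq_self_iff (hW : W ⊆ G.VSet) :
    G.U1lim η W = W ↔
      ∀ F ⊆ G.VSet \ W, F.Nonempty → ∃ x ∈ F, G.degIn (F ∪ W) x ≤ η x := by
  refine ⟨fun hlim F hF hne => ?_, fun hburn => ?_⟩
  · by_contra! hlt
    have hFU : F ∪ W ⊆ G.U1lim η W :=
      subset_U1 (Finset.union_subset (hF.trans Finset.sdiff_subset) hW)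
        (fun x hx => (Finset.mem_union.mp hx).symm.imp_right (hlt x)) _
    obtain ⟨x, hx⟩ := hne
    exact (Finset.mem_sdiff.mp (hF hx)).2 (hlim ▸ hFU (Finset.mem_union_left W hx))
  · have hWU : W ⊆ G.U1lim η W := subset_U1 hW (fun x hx => Or.inl hx) _
    have hUV : G.U1lim η W ⊆ G.VSet := G.antitone_U1 η W (Nat.zero_le _)
    refine Finset.Subset.antisymm (Finset.sdiff_eq_empty_iff_subset.mp ?_) hWU
    by_contra hne
    obtain ⟨x, hx, hle⟩ := hburn _ (Finset.sdiff_subset_sdiff hUV subset_rfl)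
      (Finset.nonempty_iff_ne_empty.mpr hne)
    rw [Finset.sdiff_union_of_subset hWU] at hle
    obtain ⟨hxU, hxW⟩ := Finset.mem_sdiff.mp hx
    exact hle.not_gt (lt_degIn_U1lim hxU hxW)

theorem recurrent_and_U1lim_eq_self_iff (hW : W ⊆ G.VSet) :
    G.Recurrent η ∧ G.U1lim η W = W ↔ G.WiredRecurrent W η ∧ G.RecurrentAvoiding W η := by
  rw [U1lim_eq_self_iff hW]
  exact ⟨fun h => ⟨h.1.wiredRecurrent hW, fun x hx => h.1.1 x (Finset.mem_sdiff.mp hx).1, h.2⟩,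
    fun h => ⟨h.1.recurrent h.2, h.2.2⟩⟩

end PhaseOne

end Sandpile.Graph

theorem statement_18_general {α : Type*} [Fintype α] [DecidableEq α] (G : Sandpile.Graph α)
    (hb : ∀ x y, G.b x y = 0 → G.b y x = 0) (W : Finset α) (hWs : G.sink ∉ W)
    (hconn : G.ConnectedOn {x : α | x ∉ W}) (ξ : α → ℕ) (hmin : G.Minimal W ξ) :
    Nat.card {ζ : α → ℕ // (∀ x, x ∉ W → ζ x = 0) ∧ G.WiredRecurrent W ζ} *
        Nat.card {η : α → ℕ // η G.sink = 0 ∧ G.Recurrent η ∧ Graph.EqOn η ξ W} =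
      Nat.card {η : α → ℕ // η G.sink = 0 ∧ G.Recurrent η ∧ G.U1lim η W = W} := by
  have hW : W ⊆ G.VSet := Graph.subset_VSet_iff.mpr hWs
  have hξ : G.WiredMinimal W ξ := hmin.wiredMinimal hWs hconn
  have extension_iff (η : α → ℕ) : η G.sink = 0 ∧ G.Recurrent η ∧ Graph.EqOn η ξ W ↔
      Graph.EqOn η ξ W ∧ η G.sink = 0 ∧ G.RecurrentAvoiding W η := by
    rw [hξ.recurrent_and_eqOn_iff hW hb, and_left_comm]
  have event_iff (η : α → ℕ) : η G.sink = 0 ∧ G.Recurrent η ∧ G.U1lim η W = W ↔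
      G.WiredRecurrent W η ∧ η G.sink = 0 ∧ G.RecurrentAvoiding W η := by
    rw [Graph.recurrent_and_U1lim_eq_self_iff hW, and_left_comm]
  have hoff : DependsOn (fun η => η G.sink = 0 ∧ G.RecurrentAvoiding W η) (W : Set α)ᶜ :=
    fun η η' h => congrArg₂ And (by rw [h _ hWs]) (G.dependsOn_recurrentAvoiding W h)
  simp only [extension_iff, event_iff]
  exact card_mul_card_of_dependsOn (G.dependsOn_wiredRecurrent W) hoff 0 ξ

/-- For a minimal configuration `ξ` on `W`:
`ν_G[η_W = ξ] = ν_G[E_{V,W}] ⋅ |R_{G_W}|⁻¹`, stated as the equivalent counting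
identity `|R_{G_W}| ⋅ #{η ∈ R_G : η_W = ξ} = #{η ∈ R_G : η ∈ E_{V,W}}`. -/
theorem statement_18 {α : Type*} [Fintype α] [DecidableEq α] (G : Sandpile.Graph α)
    (hG : G.IsSandpileGraph) (W : Finset α) (hWne : W.Nonempty) (hWs : G.sink ∉ W)
    (hconn : G.ConnectedOn {x : α | x ∉ W}) (ξ : α → ℕ)
    (hstable : ∀ x ∈ W, ξ x < G.deg x) (hmin : G.Minimal W ξ) :
    Nat.card {ζ : α → ℕ // (∀ x, x ∉ W → ζ x = 0) ∧ G.WiredRecurrent W ζ} *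
        Nat.card {η : α → ℕ // η G.sink = 0 ∧ G.Recurrent η ∧ Graph.EqOn η ξ W} =
      Nat.card {η : α → ℕ // η G.sink = 0 ∧ G.Recurrent η ∧ G.U1lim η W = W} :=
  statement_18_general G (fun x y h => (hG.1 y x).trans h) W hWs hconn ξ hmin
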